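/- arXiv:1805.02715 — 3 statements merged into one kernel-verified Lean document; each statement's English description precedes it below -/
import Mathlib

section
/- For every k ≥ 1, aw(P_2 □ P_{2k+1}, 3) = 4; that is, every exact 4-coloring of the grid P_2 □ P_{2k+1} contains a rainbow 3-AP, while some exact 3-coloring does not. -/
open SimpleGraph

/-- `v` lists the vertices of a `k`-term arithmetic progression in `G`:
consecutive vertices are at a common distance `d`. -/
def IsAPIn {V : Type*} (G : SimpleGraph V) (k : ℕ) (v : Fin k → V) : Prop :=
  ∃ d : ℕ, ∀ (i : ℕ) (h : i + 1 < k),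
    G.dist (v ⟨i, by omega⟩) (v ⟨i + 1, h⟩) = d

/-- The coloring `c` admits a rainbow `k`-AP in `G`: a `k`-AP whose vertices
are pairwise distinct and receive pairwise distinct colors. -/
def HasRainbowAP {V α : Type*} (G : SimpleGraph V) (k : ℕ) (c : V → α) : Prop :=
  ∃ v : Fin k → V, IsAPIn G k v ∧ Function.Injective (c ∘ v)

/-- The anti-van der Waerden number `aw(G,k)`: the least positive `r` such that
every exact `r`-coloring of `G` contains a rainbow `k`-AP.  (For `r = |V(G)|+1`
there is no surjection onto `r` colors, so the defining set is nonempty and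
`aw(G,k) ≤ |V(G)|+1` automatically, matching the convention.) -/
noncomputable def aw {V : Type*} [Fintype V] (G : SimpleGraph V) (k : ℕ) : ℕ :=
  sInf {r : ℕ | 0 < r ∧ ∀ c : V → Fin r, Function.Surjective c → HasRainbowAP G k c}

theorem path_dist_le (n : ℕ) : ∀ (m : ℕ) (u v : Fin (n+1)), v.val = u.val + m →
    (pathGraph (n+1)).dist u v ≤ m := by
  intro m
  induction m with
  | zero =>
    intro u v h
    have : u = v := Fin.ext (by omega)
    subst this
    simp
  | succ m ih =>
    intro u v h
    have hv := v.isLt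
    let w : Fin (n+1) := ⟨u.val + m, by omega⟩
    have h1 := ih u w rfl
    have h2 : (pathGraph (n+1)).dist w v = 1 := by
      rw [dist_eq_one_iff_adj, pathGraph_adj]
      left
      simp only [w]
      omega
    have := (pathGraph_connected n).dist_triangle (u := u) (v := w) (w := v)
    omega

theorem walk_len (n : ℕ) (u v : Fin (n+1)) (p : (pathGraph (n+1)).Walk u v) :
    (u.val - v.val) + (v.val - u.val) ≤ p.length := by
  induction p with
  | nil => simp
  | cons h p ih =>
    rw [pathGraph_adj] at h
    rw [Walk.length_cons]
    omega

theorem path_dist (n : ℕ) (u v : Fin (n+1)) :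
    (pathGraph (n+1)).dist u v = (u.val - v.val) + (v.val - u.val) := by
  apply le_antisymm
  · rcases le_total u.val v.val with h | h
    · have := path_dist_le n (v.val - u.val) u v (by omega)
      omega
    · have := path_dist_le n (u.val - v.val) v u (by omega)
      rw [dist_comm]
      omega
  · obtain ⟨p, hp⟩ := (pathGraph_connected n).exists_walk_length_eq_dist u v
    rw [← hp]
    exact walk_len n u v p

theorem grid_dist (m n : ℕ) (u v : Fin (m+1) × Fin (n+1)) :
    (pathGraph (m+1) □ pathGraph (n+1)).dist u v =
      ((u.1.val - v.1.val) + (v.1.val - u.1.val)) +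
      ((u.2.val - v.2.val) + (v.2.val - u.2.val)) := by
  have hG := (pathGraph_connected m).preconnected u.1 v.1
  have hH := (pathGraph_connected n).preconnected u.2 v.2
  unfold SimpleGraph.dist
  rw [edist_boxProd, ← hG.coe_dist_eq_edist, ← hH.coe_dist_eq_edist, path_dist, path_dist]
  norm_cast

/-- No rainbow 3-AP in the 2 by n grid coloring `f`. -/
def NR {α : Type*} (f : ℕ → ℕ → α) (n : ℕ) : Prop :=
  ∀ a i b j d k, a < 2 → b < 2 → d < 2 → i < n → j < n → k < n →
    ((a - b) + (b - a)) + ((i - j) + (j - i)) = ((b - d) + (d - b)) + ((j - k) + (k - j)) →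
    f a i = f b j ∨ f b j = f d k ∨ f a i = f d k

/-- Three distinct colors occur in the window of columns `[i, i+L)`. -/
def T3 {α : Type*} (f : ℕ → ℕ → α) (i L : ℕ) : Prop :=
  ∃ a x b y d z, a < 2 ∧ b < 2 ∧ d < 2 ∧ (i ≤ x ∧ x < i + L) ∧ (i ≤ y ∧ y < i + L) ∧
    (i ≤ z ∧ z < i + L) ∧ f a x ≠ f b y ∧ f b y ≠ f d z ∧ f a x ≠ f d z

/-- The color `r` occurs in the window. -/
def Occ {α : Type*} (f : ℕ → ℕ → α) (i L : ℕ) (r : α) : Prop :=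
  ∃ a x, a < 2 ∧ (i ≤ x ∧ x < i + L) ∧ f a x = r

theorem T3_iff {α : Type*} (f : ℕ → ℕ → α) (i L : ℕ) :
    T3 f i L ↔ ∃ p q r, p ≠ q ∧ q ≠ r ∧ p ≠ r ∧ Occ f i L p ∧ Occ f i L q ∧ Occ f i L r := by
  constructor
  · rintro ⟨a, x, b, y, d, z, ha, hb, hd, hx, hy, hz, h1, h2, h3⟩
    exact ⟨_, _, _, h1, h2, h3, ⟨a, x, ha, hx, rfl⟩, ⟨b, y, hb, hy, rfl⟩, ⟨d, z, hd, hz, rfl⟩⟩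
  · rintro ⟨p, q, r, h1, h2, h3, ⟨a, x, ha, hx, rfl⟩, ⟨b, y, hb, hy, rfl⟩, ⟨d, z, hd, hz, rfl⟩⟩
    exact ⟨a, x, b, y, d, z, ha, hb, hd, hx, hy, hz, h1, h2, h3⟩

/-- Structure of a minimal window. -/
theorem min_window {α : Type*} (f : ℕ → ℕ → α) (i L : ℕ) (h : T3 f i (L+1))
    (h1 : ¬ T3 f i L) (h2 : ¬ T3 f (i+1) L) :
    ∃ x y, x < 2 ∧ y < 2 ∧ ¬ Occ f (i+1) L (f x i) ∧ ¬ Occ f i L (f y (i+L)) ∧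
      ∃ w z, w < 2 ∧ i ≤ z ∧ z ≤ i + L ∧ f w z ≠ f x i ∧ f w z ≠ f y (i+L) := by
  rw [T3_iff] at h h1 h2
  obtain ⟨p, q, r, hpq, hqr, hpr, hp, hq, hr⟩ := h
  have key1 : ∃ s, (s = p ∨ s = q ∨ s = r) ∧ ¬ Occ f (i+1) L s := by
    by_contra! hc
    exact h2 ⟨p, q, r, hpq, hqr, hpr, hc p (by simp), hc q (by simp), hc r (by simp)⟩
  have key2 : ∃ s, (s = p ∨ s = q ∨ s = r) ∧ ¬ Occ f i L s := by
    by_contra! hc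
    exact h1 ⟨p, q, r, hpq, hqr, hpr, hc p (by simp), hc q (by simp), hc r (by simp)⟩
  obtain ⟨s, hs, hs'⟩ := key1
  obtain ⟨t, ht, ht'⟩ := key2
  have hsO : Occ f i (L+1) s := by rcases hs with rfl | rfl | rfl <;> assumption
  have htO : Occ f i (L+1) t := by rcases ht with rfl | rfl | rfl <;> assumption
  have hw : ∃ w, Occ f i (L+1) w ∧ w ≠ s ∧ w ≠ t := by
    rcases hs with rfl | rfl | rfl <;> rcases ht with rfl | rfl | rfl <;> grind
  obtain ⟨x, c, hx, hc, rfl⟩ := hsO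
  obtain ⟨y, d, hy, hd, rfl⟩ := htO
  have hci : c = i := by
    by_contra hne
    exact hs' ⟨x, c, hx, by omega, rfl⟩
  have hdi : d = i + L := by
    by_contra hne
    exact ht' ⟨y, d, hy, by omega, rfl⟩
  subst hci hdi
  obtain ⟨_, ⟨w, z, hw, hz, rfl⟩, hw1, hw2⟩ := hw
  exact ⟨x, y, hx, hy, hs', ht', w, z, hw, hz.1, by omega, hw1, hw2⟩

theorem no_T3_even {α : Type*} (f : ℕ → ℕ → α) (m : ℕ) (hNR : NR f (2*m)) :
    ¬ T3 f 0 (2*m) := by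
  intro hT
  classical
  have hex : ∃ L, ∃ i, i + L ≤ 2*m ∧ T3 f i L := ⟨2*m, 0, by omega, hT⟩
  obtain ⟨i, hi, hTL⟩ := Nat.find_spec hex
  have hmin : ∀ L', L' < Nat.find hex → ∀ i, i + L' ≤ 2*m → ¬ T3 f i L' := by
    intro L' hL' i hi ht
    exact Nat.find_min hex hL' ⟨i, hi, ht⟩
  generalize Nat.find hex = L at *
  rcases L with _ | L
  · obtain ⟨a, x, b, y, d, z, ha, hb, hd, hx, hy, hz, h1, h2, h3⟩ := hTL
    omega
  rcases Nat.eq_zero_or_pos L with h0 | hpos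
  · subst h0
    obtain ⟨a, x, b, y, d, z, ha, hb, hd, hx, hy, hz, h1, h2, h3⟩ := hTL
    obtain rfl : x = i := by omega
    obtain rfl : y = x := by omega
    obtain rfl : z = y := by omega
    have h4 : a = b ∨ b = d ∨ a = d := by omega
    rcases h4 with rfl | rfl | rfl
    · exact h1 rfl
    · exact h2 rfl
    · exact h3 rfl
  obtain ⟨x, y, hx, hy, hR, hB, w, z, hw, hz1, hz2, hwR, hwB⟩ :=
    min_window f i L hTL (hmin L (by omega) i (by omega)) (hmin L (by omega) (i+1) (by omega))
  have hR' : ∀ a j, a < 2 → i + 1 ≤ j → j ≤ i + L → f a j ≠ f x i :=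
    fun a j ha h1 h2 he => hR ⟨a, j, ha, by omega, he⟩
  have hB' : ∀ a j, a < 2 → i ≤ j → j < i + L → f a j ≠ f y (i+L) :=
    fun a j ha h1 h2 he => hB ⟨a, j, ha, by omega, he⟩
  clear hR hB hmin hex hTL hT
  have hRB : f x i ≠ f y (i+L) := hB' x i hx (by omega) (by omega)
  -- a generic contradiction: a vertex of a third color
  have mid : ∀ a j, a < 2 → j < 2*m → f a j ≠ f x i → f a j ≠ f y (i+L) →
      ((x - a) + (a - x)) + ((i - j) + (j - i)) =
        ((a - y) + (y - a)) + ((j - (i+L)) + ((i+L) - j)) → False := by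
    intro a j ha hj h1 h2 he
    have := hNR x i a j y (i+L) hx ha hy (by omega) hj (by omega) he
    grind
  have endR : ∀ a j, a < 2 → j < 2*m → f a j ≠ f x i → f a j ≠ f y (i+L) →
      ((a - x) + (x - a)) + ((j - i) + (i - j)) =
        ((x - y) + (y - x)) + ((i - (i+L)) + ((i+L) - i)) → False := by
    intro a j ha hj h1 h2 he
    have := hNR a j x i y (i+L) ha hx hy hj (by omega) (by omega) he
    grind
  have endB : ∀ a j, a < 2 → j < 2*m → f a j ≠ f x i → f a j ≠ f y (i+L) →
      ((x - y) + (y - x)) + ((i - (i+L)) + ((i+L) - i)) =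
        ((y - a) + (a - y)) + (((i+L) - j) + (j - (i+L))) → False := by
    intro a j ha hj h1 h2 he
    have := hNR x i y (i+L) a j hx hy ha (by omega) (by omega) hj he
    grind
  -- L = 1
  rcases Nat.lt_or_ge L 2 with hL1 | hL2
  · have : L = 1 := by omega
    subst this
    have hz : z = i ∨ z = i + 1 := by omega
    have hwx : ¬ (w = x ∧ z = i) := by rintro ⟨rfl, rfl⟩; exact hwR rfl
    have hwy : ¬ (w = y ∧ z = i+1) := by rintro ⟨rfl, rfl⟩; exact hwB rfl
    by_cases hxy : x = y
    · rcases hz with rfl | rfl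
      · exact endR w z hw (by omega) hwR hwB (by omega)
      · exact endB w _ hw (by omega) hwR hwB (by omega)
    · exact mid w z hw (by omega) hwR hwB (by omega)
  rcases Nat.even_or_odd' L with ⟨q, hq | hq⟩
  · -- odd number of columns
    by_cases hxy : x = y
    · exact mid x (i+q) hx (by omega) (hR' _ _ hx (by omega) (by omega))
        (hB' _ _ hx (by omega) (by omega)) (by omega)
    have hxB : f x (i+L) ≠ f y (i+L) := by
      intro he
      have := hNR x i x (i+q) x (i+L) hx hx hx (by omega) (by omega) (by omega) (by omega)
      have h1 := hR' x (i+q) hx (by omega) (by omega)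
      have h2 := hB' x (i+q) hx (by omega) (by omega)
      grind
    have hyR : f y i ≠ f x i := by
      intro he
      have := hNR y i y (i+q) y (i+L) hy hy hy (by omega) (by omega) (by omega) (by omega)
      have h1 := hR' y (i+q) hy (by omega) (by omega)
      have h2 := hB' y (i+q) hy (by omega) (by omega)
      grind
    have hxR : f x (i+L) ≠ f x i := hR' _ _ hx (by omega) (by omega)
    have hyB : f y i ≠ f y (i+L) := hB' _ _ hy (by omega) (by omega)
    have hext : i + L + 1 < 2*m ∨ 1 ≤ i := by omega
    rcases hext with he | he
    · have e1 : f x (i+L+1) ≠ f x i := by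
        intro h
        have := hNR y (i+L) x (i+L) x (i+L+1) hy hx hx (by omega) (by omega) (by omega) (by omega)
        grind
      have e2 : f x (i+L+1) = f y (i+L) := by
        by_contra h
        exact endR x (i+L+1) hx (by omega) e1 h (by omega)
      have := hNR x i x (i+L+1) y (i+1) hx hx hy (by omega) (by omega) (by omega) (by omega)
      have h1 := hR' y (i+1) hy (by omega) (by omega)
      have h2 := hB' y (i+1) hy (by omega) (by omega)
      grind
    · have e1 : f y (i-1) ≠ f y (i+L) := by
        intro h
        have := hNR x i y i y (i-1) hx hy hy (by omega) (by omega) (by omega) (by omega)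
        grind
      have e2 : f y (i-1) = f x i := by
        by_contra h
        exact endB y (i-1) hy (by omega) h e1 (by omega)
      have := hNR y (i+L) y (i-1) x (i+L-1) hy hy hx (by omega) (by omega) (by omega) (by omega)
      have h1 := hR' x (i+L-1) hx (by omega) (by omega)
      have h2 := hB' x (i+L-1) hx (by omega) (by omega)
      grind
  · -- even number of columns
    by_cases hxy : x = y
    · have hx' : 1 - x < 2 := by omega
      exact endR (1-x) (i+L-1) hx' (by omega) (hR' _ _ hx' (by omega) (by omega))
        (hB' _ _ hx' (by omega) (by omega)) (by omega)
    · exact mid x (i+q+1) hx (by omega) (hR' _ _ hx (by omega) (by omega))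
        (hB' _ _ hx (by omega) (by omega)) (by omega)

theorem four_colors {α : Type*} (f : ℕ → ℕ → α) (k : ℕ) (hk : 1 ≤ k) (hNR : NR f (2*k+1))
    (a x : Fin 4 → ℕ) (ha : ∀ s, a s < 2) (hx : ∀ s, x s < 2*k+1)
    (hinj : Function.Injective fun s => f (a s) (x s)) : False := by
  have hA : ¬ T3 f 0 (2*k) := no_T3_even f k
    (fun a i b j d k' ha hb hd hi hj hk => hNR a i b j d k' ha hb hd (by omega) (by omega) (by omega))
  have hB : ¬ T3 (fun a i => f a (i+1)) 0 (2*k) := no_T3_even _ k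
    (fun a i b j d k' ha hb hd hi hj hk h =>
      hNR a (i+1) b (j+1) d (k'+1) ha hb hd (by omega) (by omega) (by omega) (by omega))
  have hA' : ∀ a x b y d z, a < 2 → b < 2 → d < 2 → x < 2*k → y < 2*k → z < 2*k →
      f a x = f b y ∨ f b y = f d z ∨ f a x = f d z := by
    intro a x b y d z ha hb hd hx hy hz
    by_contra! h
    exact hA ⟨a, x, b, y, d, z, ha, hb, hd, by omega, by omega, by omega, h⟩
  have hB' : ∀ a x b y d z, a < 2 → b < 2 → d < 2 → 1 ≤ x → 1 ≤ y → 1 ≤ z →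
      x < 2*k+1 → y < 2*k+1 → z < 2*k+1 →
      f a x = f b y ∨ f b y = f d z ∨ f a x = f d z := by
    intro a x b y d z ha hb hd hx hy hz hx' hy' hz'
    by_contra! h
    refine hB ⟨a, x-1, b, y-1, d, z-1, ha, hb, hd, by omega, by omega, by omega, ?_⟩
    simp only [Nat.sub_add_cancel hx, Nat.sub_add_cancel hy, Nat.sub_add_cancel hz]
    exact h
  have hne : ∀ s t, s ≠ t → f (a s) (x s) ≠ f (a t) (x t) := fun s t h he => h (hinj he)
  have hP : ∀ s t u, s ≠ t → t ≠ u → s ≠ u → ¬ (x s < 2*k ∧ x t < 2*k ∧ x u < 2*k) := by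
    rintro s t u h1 h2 h3 ⟨h4, h5, h6⟩
    have := hA' _ _ _ _ _ _ (ha s) (ha t) (ha u) h4 h5 h6
    have := hne s t h1
    have := hne t u h2
    have := hne s u h3
    tauto
  have hQ : ∀ s t u, s ≠ t → t ≠ u → s ≠ u → ¬ (1 ≤ x s ∧ 1 ≤ x t ∧ 1 ≤ x u) := by
    rintro s t u h1 h2 h3 ⟨h4, h5, h6⟩
    have := hB' _ _ _ _ _ _ (ha s) (ha t) (ha u) h4 h5 h6 (hx s) (hx t) (hx u)
    have := hne s t h1
    have := hne t u h2
    have := hne s u h3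
    tauto
  have hM : ∀ s t u v, s ≠ t → u ≠ v → s ≠ u → s ≠ v → t ≠ u → t ≠ v →
      ¬ (x s < 2*k ∧ x t < 2*k ∧ 1 ≤ x u ∧ 1 ≤ x v) := by
    rintro s t u v h1 h2 h3 h4 h5 h6 ⟨h7, h8, h9, h10⟩
    have p1 := hA' _ _ _ _ 0 1 (ha s) (ha t) (by omega) h7 h8 (by omega)
    have p2 := hB' _ _ _ _ 0 1 (ha u) (ha v) (by omega) h9 h10 (by omega) (hx u) (hx v) (by omega)
    have := hne s t h1
    have := hne u v h2
    have := hne s u h3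
    have := hne s v h4
    have := hne t u h5
    have := hne t v h6
    grind
  have := hP 0 1 2 (by decide) (by decide) (by decide)
  have := hP 0 1 3 (by decide) (by decide) (by decide)
  have := hP 0 2 3 (by decide) (by decide) (by decide)
  have := hP 1 2 3 (by decide) (by decide) (by decide)
  have := hQ 0 1 2 (by decide) (by decide) (by decide)
  have := hQ 0 1 3 (by decide) (by decide) (by decide)
  have := hQ 0 2 3 (by decide) (by decide) (by decide)
  have := hQ 1 2 3 (by decide) (by decide) (by decide)
  have := hM 0 1 2 3 (by decide) (by decide) (by decide) (by decide) (by decide) (by decide)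
  have := hM 0 2 1 3 (by decide) (by decide) (by decide) (by decide) (by decide) (by decide)
  have := hM 0 3 1 2 (by decide) (by decide) (by decide) (by decide) (by decide) (by decide)
  have := hM 1 2 0 3 (by decide) (by decide) (by decide) (by decide) (by decide) (by decide)
  have := hM 1 3 0 2 (by decide) (by decide) (by decide) (by decide) (by decide) (by decide)
  have := hM 2 3 0 1 (by decide) (by decide) (by decide) (by decide) (by decide) (by decide)
  have g : ∀ s, x s < 2*k ∨ 1 ≤ x s := fun s => by omega
  have g0 := g 0
  have g1 := g 1
  have g2 := g 2
  have g3 := g 3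
  clear hP hQ hM g hne hA hB hA' hB' hNR hinj
  rcases g0 with g0 | g0 <;> rcases g1 with g1 | g1 <;> rcases g2 with g2 | g2 <;>
    rcases g3 with g3 | g3 <;> simp_all

theorem four_mem (k : ℕ) (hk : 1 ≤ k) (c : Fin 2 × Fin (2*k+1) → Fin 4)
    (hc : Function.Surjective c) : HasRainbowAP (pathGraph 2 □ pathGraph (2 * k + 1)) 3 c := by
  by_contra hno
  choose g hg using hc
  refine four_colors (fun a i => c (Fin.ofNat 2 a, Fin.ofNat (2*k+1) i)) k hk ?_
    (fun s => (g s).1.val) (fun s => (g s).2.val) (fun s => (g s).1.isLt)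
    (fun s => (g s).2.isLt) ?_
  · intro a i b j d l ha hb hd hi hj hl he
    by_contra! hcon
    apply hno
    refine ⟨![(Fin.ofNat 2 a, Fin.ofNat (2*k+1) i), (Fin.ofNat 2 b, Fin.ofNat (2*k+1) j),
      (Fin.ofNat 2 d, Fin.ofNat (2*k+1) l)], 
      ⟨((b - d) + (d - b)) + ((j - l) + (l - j)), fun t ht => ?_⟩, ?_⟩
    · have : t = 0 ∨ t = 1 := by omega
      rcases this with rfl | rfl
      · rw [grid_dist 1 (2*k)]
        simp [Fin.ofNat, Nat.mod_eq_of_lt, *]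
      · rw [grid_dist 1 (2*k)]
        simp [Fin.ofNat, Nat.mod_eq_of_lt, *]
    · obtain ⟨h1, h2, h3⟩ := hcon
      intro s t hst
      fin_cases s <;> fin_cases t <;> simp_all
  · intro s t hst
    simpa [hg] using hst

theorem three_not_mem (k : ℕ) (hk : 1 ≤ k) : ∃ c : Fin 2 × Fin (2*k+1) → Fin 3,
    Function.Surjective c ∧ ¬ HasRainbowAP (pathGraph 2 □ pathGraph (2 * k + 1)) 3 c := by
  refine ⟨fun p => if p.1.val = 0 ∧ p.2.val = 0 then 0 else
    if p.1.val = 1 ∧ p.2.val = 2*k then 1 else 2, ?_, ?_⟩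
  · intro s
    fin_cases s
    · exact ⟨(0, 0), by simp⟩
    · exact ⟨(1, ⟨2*k, by omega⟩), by simp⟩
    · exact ⟨(1, 0), by simp; omega⟩
  · rintro ⟨v, ⟨d, hd⟩, hinj⟩
    have d1 := hd 0 (by omega)
    have d2 := hd 1 (by omega)
    rw [grid_dist 1 (2*k)] at d1 d2
    have i1 := hinj.ne (show (0 : Fin 3) ≠ 1 by decide)
    have i2 := hinj.ne (show (1 : Fin 3) ≠ 2 by decide)
    have i3 := hinj.ne (show (0 : Fin 3) ≠ 2 by decide)
    simp only [Function.comp] at i1 i2 i3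
    change _ + (((v 0).2.val - (v 1).2.val) + ((v 1).2.val - (v 0).2.val)) = d at d1
    change ((v 0).1.val - (v 1).1.val) + ((v 1).1.val - (v 0).1.val) + _ = d at d1
    change _ + (((v 1).2.val - (v 2).2.val) + ((v 2).2.val - (v 1).2.val)) = d at d2
    change ((v 1).1.val - (v 2).1.val) + ((v 2).1.val - (v 1).1.val) + _ = d at d2
    have a0 := (v 0).1.isLt
    have a1 := (v 1).1.isLt
    have a2 := (v 2).1.isLt
    have b0 := (v 0).2.isLt
    have b1 := (v 1).2.isLt
    have b2 := (v 2).2.isLt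
    generalize (v 0).1.val = p0 at *
    generalize (v 1).1.val = p1 at *
    generalize (v 2).1.val = p2 at *
    generalize (v 0).2.val = q0 at *
    generalize (v 1).2.val = q1 at *
    generalize (v 2).2.val = q2 at *
    split_ifs at i1 i2 i3 <;> first | exact absurd rfl i1 | exact absurd rfl i2 | exact absurd rfl i3 | omega

/-- for every `k ≥ 1`, `aw(P_2 □ P_{2k+1}, 3) = 4`. -/
theorem aw_p2_podd (k : ℕ) (hk : 1 ≤ k) :
    aw (pathGraph 2 □ pathGraph (2 * k + 1)) 3 = 4 := by
  unfold aw
  apply le_antisymm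
  · exact Nat.sInf_le ⟨by omega, four_mem k hk⟩
  · refine le_csInf ⟨4, by omega, four_mem k hk⟩ ?_
    rintro r ⟨hr, h⟩
    by_contra hlt
    have hr3 : r = 1 ∨ r = 2 ∨ r = 3 := by omega
    have small : ∀ r, r < 3 → ∀ c : Fin 2 × Fin (2*k+1) → Fin r,
        ¬ HasRainbowAP (pathGraph 2 □ pathGraph (2 * k + 1)) 3 c := by
      rintro r hr c ⟨v, -, hinj⟩
      have := Fintype.card_le_of_injective _ hinj
      simp at this
      omega
    rcases hr3 with rfl | rfl | rfl
    · exact small 1 (by omega) (fun _ => 0) (h _ (fun s => ⟨(0, 0), by omega⟩))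
    · refine small 2 (by omega) (fun p => p.1) (h _ (fun s => ⟨(s, 0), rfl⟩))
    · obtain ⟨c, hc, hn⟩ := three_not_mem k hk
      exact hn (h c hc)
end

section
/- If G and H are connected graphs each with at least 2 vertices, then aw(G □ H, 3) ≤ 4; that is, every exact 4-coloring of the Cartesian product G □ H contains a rainbow 3-AP. -/
open SimpleGraph

/-- A geodesic between two vertices of a connected graph. -/
theorem exists_geodesic {V : Type*} {G : SimpleGraph V} (hG : G.Connected) (x s : V) :
    ∃ p : ℕ → V, p 0 = x ∧ p (G.dist x s) = s ∧
      ∀ i j, i ≤ j → j ≤ G.dist x s → G.dist (p i) (p j) = j - i := by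
  obtain ⟨w, hw⟩ := hG.exists_walk_length_eq_dist x s
  have up : ∀ i n, i + n ≤ w.length → G.dist (w.getVert i) (w.getVert (i + n)) ≤ n := by
    intro i n
    induction n with
    | zero => intro _; simp
    | succ n ih =>
      intro h
      have h1 := ih (by omega)
      have h2 : G.dist (w.getVert (i + n)) (w.getVert (i + n + 1)) = 1 :=
        dist_eq_one_iff_adj.mpr (w.adj_getVert_succ (by omega))
      have h3 := hG.dist_triangle (u := w.getVert i) (v := w.getVert (i + n))
        (w := w.getVert (i + n + 1))
      rw [← add_assoc]
      omega
  refine ⟨w.getVert, w.getVert_zero, by rw [← hw]; exact w.getVert_length, ?_⟩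
  intro i j hij hj
  have h1 := up i (j - i) (by omega)
  have h2 := up 0 i (by omega)
  have h3 := up j (w.length - j) (by omega)
  rw [show i + (j - i) = j by omega] at h1
  rw [show 0 + i = i by omega, w.getVert_zero] at h2
  rw [show j + (w.length - j) = w.length by omega, w.getVert_length] at h3
  have h4 := hG.dist_triangle (u := x) (v := w.getVert i) (w := s)
  have h5 := hG.dist_triangle (u := w.getVert i) (v := w.getVert j) (w := s)
  omega

/-- The colouring `c` of the vertices of `G □ H` has no rainbow 3-AP. -/
def RF {VG VH α : Type*} (G : SimpleGraph VG) (H : SimpleGraph VH) (c : VG → VH → α) : Prop :=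
  ∀ x y x1 y1 x2 y2, G.dist x x1 + H.dist y y1 = G.dist x x2 + H.dist y y2 →
    c x1 y1 = c x y ∨ c x2 y2 = c x y ∨ c x1 y1 = c x2 y2

theorem RF.swap {VG VH α : Type*} {G : SimpleGraph VG} {H : SimpleGraph VH} {c : VG → VH → α}
    (h : RF G H c) : RF H G (fun y x => c x y) := by
  intro x y x1 y1 x2 y2 hd
  exact h y x y1 x1 y2 x2 (by omega)

/-- An edge with two colours and a vertex of a third colour cannot occur in the same row. -/
theorem row_core {VG VH α : Type*} {G : SimpleGraph VG} {H : SimpleGraph VH} {c : VG → VH → α}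
    (hG : G.Connected) (h : RF G H c) {y y1 : VH} (hy : H.dist y y1 = 1) :
    ∀ k x' x s, G.dist x' x = 1 → G.dist x s = k → c x' y ≠ c x y → c s y ≠ c x' y →
      c s y ≠ c x y → False := by
  intro k
  induction k using Nat.strong_induction_on with
  | _ k ih =>
  intro x' x s hx hk h1 h2 h3
  have hy' : H.dist y1 y = 1 := by rw [SimpleGraph.dist_comm]; exact hy
  have hyy : H.dist y y = 0 := SimpleGraph.dist_self
  have hyy1 : H.dist y1 y1 = 0 := SimpleGraph.dist_self
  have hx2 : G.dist x x' = 1 := by rw [SimpleGraph.dist_comm]; exact hx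
  have e1 : ¬ G.dist x' s < k := fun hl => ih _ hl x x' s hx2 rfl h1.symm h3 h2
  have e2 : G.dist x' s ≠ k := by
    intro he
    rcases h s y x' y x y (by
      rw [SimpleGraph.dist_comm (u := s) (v := x'), SimpleGraph.dist_comm (u := s) (v := x), he, hk]) with q | q | q
    · exact h2 q.symm
    · exact h3 q.symm
    · exact h1 q
  have e3 := hG.dist_triangle (u := x') (v := x) (w := s)
  have e4 : G.dist x' s = k + 1 := by omega
  have hk1 : k ≠ 1 := by
    intro he
    rcases h x y x' y s y (by omega) with q | q | q
    · exact h1 q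
    · exact h3 q
    · exact h2 q.symm
  have hk0 : k ≠ 0 := by
    rintro rfl
    have := (hG.dist_eq_zero_iff).mp hk
    exact h3 (by rw [this])
  obtain ⟨p, p0, pk, pd⟩ := exists_geodesic hG x s
  rw [hk] at pk pd
  have wd : ∀ i, i ≤ k → G.dist x' (p i) = i + 1 := by
    intro i hi
    have q1 := hG.dist_triangle (u := x') (v := x) (w := p i)
    have q2 := hG.dist_triangle (u := x') (v := p i) (w := s)
    have q3 := pd 0 i (by omega) hi
    have q4 := pd i k hi le_rfl
    rw [p0] at q3
    rw [pk] at q4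
    omega
  have col : ∀ i, i < k → c (p i) y = c x y := by
    intro i
    induction i with
    | zero => intro _; rw [p0]
    | succ i ihi =>
      intro hi
      have q := ihi (by omega)
      have q1 := pd i (i + 1) (by omega) hi.le
      have q2 := pd (i + 1) k hi.le le_rfl
      have q3 := pd 0 (i + 1) (by omega) hi.le
      rw [pk] at q2
      rw [p0] at q3
      by_contra hne
      by_cases hb : c (p (i + 1)) y = c x' y
      · refine ih (k - (i + 1)) (by omega) (p i) (p (i + 1)) s (by omega) q2 ?_ ?_ ?_
        · rw [q, hb]; exact h1.symm
        · rw [q]; exact h3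
        · rw [hb]; exact h2
      · exact ih (i + 1) hi x' x (p (i + 1)) hx q3 h1 hb hne
  have a1 : c x y1 = c x' y := by
    have n1 := h x y x' y x y1 (by rw [hx2, hyy, hy, SimpleGraph.dist_self])
    have n2 := h s y x' y x y1 (by
      rw [SimpleGraph.dist_comm (u := s) (v := x'), SimpleGraph.dist_comm (u := s) (v := x), e4, hk, hyy, hy])
    grind
  have b1 : c (p (k - 1)) y1 = c s y := by
    have d1 := pd (k - 1) k (by omega) le_rfl
    rw [pk] at d1
    have d2 := wd (k - 1) (by omega)
    have c1 := col (k - 1) (by omega)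
    have n1 := h (p (k - 1)) y s y (p (k - 1)) y1 (by rw [d1, hyy, hy, SimpleGraph.dist_self]; omega)
    have n2 := h x' y s y (p (k - 1)) y1 (by rw [e4, d2, hyy, hy]; omega)
    grind
  have d1 := pd 0 (k - 1) (by omega) (by omega)
  have d2 := pd 0 (k - 2) (by omega) (by omega)
  rw [p0] at d1 d2
  have c1 := col (k - 2) (by omega)
  have n := h x y1 (p (k - 1)) y1 (p (k - 2)) y (by rw [d1, d2, hyy1, hy']; omega)
  rw [a1, b1, c1] at n
  rcases n with q | q | q
  · exact h2 q
  · exact h1 q.symm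
  · exact h3 q

theorem exists_bichrom {V α : Type*} {G : SimpleGraph V} (hG : G.Connected) (f : V → α)
    {a b : V} (hab : f a ≠ f b) : ∃ u v, G.dist u v = 1 ∧ f u ≠ f v := by
  obtain ⟨p, p0, pk, pd⟩ := exists_geodesic hG a b
  by_contra hcon
  push Not at hcon
  have : ∀ i, i ≤ G.dist a b → f (p i) = f a := by
    intro i
    induction i with
    | zero => intro _; rw [p0]
    | succ i ih =>
      intro hi
      rw [← ih (by omega)]
      exact (hcon _ _ (by rw [pd i (i + 1) (by omega) hi]; omega)).symm
  have := this _ le_rfl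
  rw [pk] at this
  exact hab this.symm

/-- Every row has at most two colours. -/
theorem row_two {VG VH α : Type*} {G : SimpleGraph VG} {H : SimpleGraph VH} {c : VG → VH → α}
    (hG : G.Connected) (hH : H.Connected) [Nontrivial VH] (h : RF G H c) (y : VH)
    (x1 x2 x3 : VG) (h12 : c x1 y ≠ c x2 y) : c x3 y = c x1 y ∨ c x3 y = c x2 y := by
  by_contra hcon
  push Not at hcon
  obtain ⟨y1, hy1⟩ := hH.preconnected.exists_adj_of_nontrivial y
  obtain ⟨u, v, huv, hc⟩ := exists_bichrom hG (fun x => c x y) h12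
  have core := row_core hG h (dist_eq_one_iff_adj.mpr hy1)
  have : ∃ s, c s y ≠ c u y ∧ c s y ≠ c v y := by
    by_contra hn
    push Not at hn
    have q1 := hn x1
    have q2 := hn x2
    have q3 := hn x3
    clear hn core
    by_cases r1 : c x1 y = c u y <;> by_cases r2 : c x2 y = c u y <;>
      by_cases r3 : c x3 y = c u y <;> simp_all
  obtain ⟨s, hs1, hs2⟩ := this
  exact core _ u v s huv rfl hc hs1 hs2

/-- No rectangle has four different colours at its corners (with the smaller side vertical). -/
theorem no_rect {VG VH α : Type*} {G : SimpleGraph VG} {H : SimpleGraph VH} {c : VG → VH → α}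
    (hG : G.Connected) (hH : H.Connected) [Nontrivial VG] [Nontrivial VH] (h : RF G H c) :
    ∀ n x x' y y', G.dist x x' + H.dist y y' = n → c x y ≠ c x' y → c x y ≠ c x y' →
      c x y ≠ c x' y' → c x' y ≠ c x y' → c x' y ≠ c x' y' → c x y' ≠ c x' y' → False := by
  intro n
  induction n using Nat.strong_induction_on with
  | _ n ih =>
  intro x x' y y' hn h1 h2 h3 h4 h5 h6
  have row := row_two hG hH h
  have colm := row_two hH hG h.swap
  have hx0 : G.dist x x' ≠ 0 := fun e => h1 (by rw [hG.dist_eq_zero_iff.mp e])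
  have hy0 : H.dist y y' ≠ 0 := fun e => h2 (by rw [hH.dist_eq_zero_iff.mp e])
  have cy := SimpleGraph.dist_comm (G := H) (u := y) (v := y')
  have cx := SimpleGraph.dist_comm (G := G) (u := x) (v := x')
  rcases le_total (H.dist y y') (G.dist x x') with hle | hle
  · obtain ⟨p, p0, pk, pd⟩ := exists_geodesic hG x' x
    have d1 := pd 0 (H.dist y y') (by omega) (by omega)
    have d2 := pd (H.dist y y') (G.dist x' x) (by omega) le_rfl
    rw [p0] at d1
    rw [pk, SimpleGraph.dist_comm] at d2
    set s := p (H.dist y y') with hs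
    have r1 := row y x x' s h1
    have r2 := row y' x x' s h6
    have n1 := h x' y s y x' y' (by rw [d1, SimpleGraph.dist_self, SimpleGraph.dist_self]; omega)
    have n2 := h x' y' s y' x' y (by rw [d1, SimpleGraph.dist_self, SimpleGraph.dist_self]; omega)
    have f1 : c s y = c x' y := by grind
    have f2 : c s y' = c x' y' := by grind
    refine ih _ ?_ x s y y' rfl ?_ ?_ ?_ ?_ ?_ ?_ <;> first | omega | (simp only [f1, f2]; assumption)
  · obtain ⟨p, p0, pk, pd⟩ := exists_geodesic hH y' y
    have d1 := pd 0 (G.dist x x') (by omega) (by omega)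
    have d2 := pd (G.dist x x') (H.dist y' y) (by omega) le_rfl
    rw [p0] at d1
    rw [pk, SimpleGraph.dist_comm] at d2
    set s := p (G.dist x x') with hs
    have r1 := colm x y y' s h2
    have r2 := colm x' y y' s h5
    have n1 := h x y' x s x' y' (by rw [d1, SimpleGraph.dist_self, SimpleGraph.dist_self]; omega)
    have n2 := h x' y' x' s x y' (by rw [d1, SimpleGraph.dist_self, SimpleGraph.dist_self]; omega)
    have f1 : c x s = c x y' := by grind
    have f2 : c x' s = c x' y' := by grind
    refine ih _ ?_ x x' y s rfl ?_ ?_ ?_ ?_ ?_ ?_ <;> first | omega | (simp only [f1, f2]; assumption)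

/-- Two different colour pairs cannot occupy two rows. -/
theorem no_two_rows {VG VH α : Type*} {G : SimpleGraph VG} {H : SimpleGraph VH}
    {c : VG → VH → α}
    (hG : G.Connected) (hH : H.Connected) [Nontrivial VG] [Nontrivial VH] (h : RF G H c)
    {y y' : VH} {x1 x2 x3 x4 : VG} (h12 : c x1 y ≠ c x2 y) (h34 : c x3 y' ≠ c x4 y')
    (h13 : c x1 y ≠ c x3 y') (h14 : c x1 y ≠ c x4 y') (h23 : c x2 y ≠ c x3 y')
    (h24 : c x2 y ≠ c x4 y') : False := by
  have row := row_two hG hH h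
  have key : ∀ x x', c x y ≠ c x' y → c x y' ≠ c x' y' → False := by
    intro x x' q1 q2
    have r1 := row y x1 x2 x h12
    have r2 := row y x1 x2 x' h12
    have r3 := row y' x3 x4 x h34
    have r4 := row y' x3 x4 x' h34
    refine no_rect hG hH h _ x x' y y' rfl q1 ?_ ?_ ?_ ?_ q2 <;> grind
  have k12 := key x1 x2 h12
  have k1 := key x1 x3
  have k2 := key x2 x3
  have k3 := key x1 x4
  have k4 := key x2 x4
  have r3 := row y x1 x2 x3 h12
  have r4 := row y x1 x2 x4 h12
  have s1 := row y' x3 x4 x1 h34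
  have s2 := row y' x3 x4 x2 h34
  grind

/-- There cannot be three colours (a set `T` of vertices with at least three colours) no two of
which share a line. -/
theorem no_star {VG VH α : Type*} {G : SimpleGraph VG} {H : SimpleGraph VH}
    {c : VG → VH → α}
    (hG : G.Connected) (hH : H.Connected) (h : RF G H c)
    (T : α → Prop)
    (hrow : ∀ x x' y, T (c x y) → T (c x' y) → c x y = c x' y)
    (hcol : ∀ x y y', T (c x y) → T (c x y') → c x y = c x y')
    (h3 : ∀ i j, ∃ x y, T (c x y) ∧ c x y ≠ i ∧ c x y ≠ j) : False := by
  classical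
  have hex : ∃ n, ∃ x y x' y', T (c x y) ∧ T (c x' y') ∧ c x y ≠ c x' y' ∧
      G.dist x x' + H.dist y y' = n := by
    obtain ⟨x0⟩ := hG.nonempty
    obtain ⟨y0⟩ := hH.nonempty
    obtain ⟨x, y, t, -, -⟩ := h3 (c x0 y0) (c x0 y0)
    obtain ⟨x', y', t', q, -⟩ := h3 (c x y) (c x y)
    exact ⟨_, x, y, x', y', t, t', q.symm, rfl⟩
  obtain ⟨x, y, x', y', t, t', hne, hD⟩ := Nat.find_spec hex
  have hmin : ∀ u v u' v', T (c u v) → T (c u' v') → c u v ≠ c u' v' →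
      Nat.find hex ≤ G.dist u u' + H.dist v v' := fun u v u' v' a b e =>
    Nat.find_min' hex ⟨u, v, u', v', a, b, e, rfl⟩
  generalize Nat.find hex = D at hD hmin
  have sph : ∀ u v, G.dist x u + H.dist y v = D → c u v = c x y ∨ c u v = c x' y' := by
    intro u v huv
    have := h x y u v x' y' (by omega)
    grind
  obtain ⟨z1, z2, tz, hz, hz'⟩ := h3 (c x y) (c x' y')
  have hzD := hmin x y z1 z2 t tz hz.symm
  rcases le_total (G.dist x z1) D with hle | hle
  · obtain ⟨r, r0, rk, rd⟩ := exists_geodesic hH y z2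
    have d := rd 0 (D - G.dist x z1) (by omega) (by omega)
    rw [r0] at d
    have s := sph z1 (r (D - G.dist x z1)) (by omega)
    have q := hcol z1 z2 (r (D - G.dist x z1)) tz (by rcases s with s | s <;> rw [s] <;> assumption)
    grind
  · obtain ⟨e, e0, ek, ed⟩ := exists_geodesic hG x z1
    obtain ⟨r, r0, rk, rd⟩ := exists_geodesic hH y y'
    have chain : ∀ b, b ≤ H.dist y y' → c (e (D - b)) (r b) = c x y := by
      intro b
      induction b with
      | zero =>
        intro _
        have d := ed 0 D (by omega) hle
        rw [e0] at d
        have s := sph (e D) y (by rw [d, SimpleGraph.dist_self]; omega)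
        rw [r0]
        have q := hrow x (e D) y t (by rcases s with s | s <;> simp only [s] <;> assumption)
        exact q.symm
      | succ b ihb =>
        intro hb
        have q := ihb (by omega)
        have d1 := ed 0 (D - (b + 1)) (by omega) (by omega)
        have d2 := rd 0 (b + 1) (by omega) hb
        have d3 := ed (D - (b + 1)) (D - b) (by omega) (by omega)
        have d4 := rd b (b + 1) (by omega) hb
        rw [e0] at d1
        rw [r0] at d2
        have s := sph (e (D - (b + 1))) (r (b + 1)) (by omega)
        by_contra hne2
        have s' : c (e (D - (b + 1))) (r (b + 1)) = c x' y' := by tauto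
        have m := h (e (D - (b + 1))) (r b) (e (D - b)) (r b) (e (D - (b + 1))) (r (b + 1))
          (by rw [SimpleGraph.dist_self, SimpleGraph.dist_self]; omega)
        have g1 := hrow (e (D - b)) (e (D - (b + 1))) (r b)
        have g2 := hcol (e (D - (b + 1))) (r (b + 1)) (r b)
        rw [q] at m g1
        rw [s'] at m g2
        rcases m with m | m | m
        · exact hne (m.trans (g2 t' (by rw [← m]; exact t)).symm)
        · exact hne ((g1 t (by rw [← m]; exact t')).trans m.symm)
        · exact hne m
    have q := chain _ le_rfl
    rw [rk] at q
    have q2 := hrow (e (D - H.dist y y')) x' y' (by rw [q]; exact t) t'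
    exact hne (by rw [← q, q2])

theorem main_false {VG VH : Type*} {G : SimpleGraph VG} {H : SimpleGraph VH}
    {c : VG → VH → Fin 4}
    (hG : G.Connected) (hH : H.Connected) [Nontrivial VG] [Nontrivial VH] (h : RF G H c)
    (hs : ∀ i, ∃ x y, c x y = i) : False := by
  let Rw : Fin 4 → Fin 4 → Prop := fun i j => ∃ x x' y, c x y = i ∧ c x' y = j
  let Cl : Fin 4 → Fin 4 → Prop := fun i j => ∃ x y y', c x y = i ∧ c x y' = j
  let L : Fin 4 → Fin 4 → Prop := fun i j => Rw i j ∨ Cl i j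
  have rc : ∀ i j k l, i ≠ j → i ≠ k → i ≠ l → j ≠ k → j ≠ l → k ≠ l → Rw i j → Cl k l →
      False := by
    rintro i j k l q1 q2 q3 q4 q5 q6 ⟨x, x', y, rfl, rfl⟩ ⟨x2, y1, y2, rfl, rfl⟩
    have r1 := row_two hG hH h y x x' x2 q1
    have r2 := row_two hH hG h.swap x2 y1 y2 y q6
    grind
  have nodis : ∀ i j k l, i ≠ j → i ≠ k → i ≠ l → j ≠ k → j ≠ l → k ≠ l → L i j → L k l →
      False := by
    intro i j k l q1 q2 q3 q4 q5 q6 h1 h2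
    rcases h1 with h1 | h1 <;> rcases h2 with h2 | h2
    · obtain ⟨x, x', y, rfl, rfl⟩ := h1
      obtain ⟨u, u', v, rfl, rfl⟩ := h2
      exact no_two_rows hG hH h q1 q6 q2 q3 q4 q5
    · exact rc i j k l q1 q2 q3 q4 q5 q6 h1 h2
    · exact rc k l i j q6 q2.symm q4.symm q3.symm q5.symm q1 h2 h1
    · obtain ⟨x, x', y, rfl, rfl⟩ := h1
      obtain ⟨u, u', v, rfl, rfl⟩ := h2
      exact no_two_rows hH hG h.swap q1 q6 q2 q3 q4 q5
  have symL : ∀ i j, L i j → L j i := by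
    rintro i j (⟨x, x', y, e1, e2⟩ | ⟨x, x', y, e1, e2⟩)
    · exact Or.inl ⟨x', x, y, e2, e1⟩
    · exact Or.inr ⟨x, y, x', e2, e1⟩
  have noiso : ∀ i, ∃ j, j ≠ i ∧ L i j := by
    intro i
    by_contra hcon
    push Not at hcon
    obtain ⟨x, y, hxy⟩ := hs i
    obtain ⟨x', y', hxy'⟩ := hs (i + 1)
    have e1 : c x' y = i := by
      by_contra hne
      exact hcon _ hne (Or.inl ⟨x, x', y, hxy, rfl⟩)
    have hne : i + 1 ≠ i := (by decide : ∀ i : Fin 4, i + 1 ≠ i) i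
    exact hcon (i + 1) hne (Or.inr ⟨x', y, y', e1, hxy'⟩)
  have star : ∀ i j k, i ≠ j → i ≠ k → j ≠ k → ¬ L i j → ¬ L i k → ¬ L j k → False := by
    intro i j k q1 q2 q3 l1 l2 l3
    have l1' : ¬ L j i := fun l => l1 (symL _ _ l)
    have l2' : ¬ L k i := fun l => l2 (symL _ _ l)
    have l3' : ¬ L k j := fun l => l3 (symL _ _ l)
    have gen : ∀ a b, (a = i ∨ a = j ∨ a = k) → (b = i ∨ b = j ∨ b = k) → L a b → a = b := by
      rintro a b (rfl | rfl | rfl) (rfl | rfl | rfl) hl <;> first | rfl | (exfalso; tauto)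
    refine no_star hG hH h (fun a => a = i ∨ a = j ∨ a = k) ?_ ?_ ?_
    · intro x x' y t t'
      exact gen _ _ t t' (Or.inl ⟨x, x', y, rfl, rfl⟩)
    · intro x y y' t t'
      exact gen _ _ t t' (Or.inr ⟨x, y, y', rfl, rfl⟩)
    · intro a b
      have : ∃ d, (d = i ∨ d = j ∨ d = k) ∧ d ≠ a ∧ d ≠ b := by
        by_contra hn
        push Not at hn
        have := hn i
        have := hn j
        have := hn k
        grind
      obtain ⟨d, hd, hda, hdb⟩ := this
      obtain ⟨x, y, rfl⟩ := hs d
      exact ⟨x, y, hd, hda, hdb⟩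
  have dis1 := nodis 0 1 2 3 (by decide) (by decide) (by decide) (by decide) (by decide) (by decide)
  have dis2 := nodis 0 2 1 3 (by decide) (by decide) (by decide) (by decide) (by decide) (by decide)
  have dis3 := nodis 0 3 1 2 (by decide) (by decide) (by decide) (by decide) (by decide) (by decide)
  have st1 := star 0 1 2 (by decide) (by decide) (by decide)
  have st2 := star 0 1 3 (by decide) (by decide) (by decide)
  have st3 := star 0 2 3 (by decide) (by decide) (by decide)
  have st4 := star 1 2 3 (by decide) (by decide) (by decide)
  have i0 := noiso 0
  have i1 := noiso 1
  have i2 := noiso 2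
  have i3 := noiso 3
  have s01 := symL 1 0
  have s02 := symL 2 0
  have s03 := symL 3 0
  have s12 := symL 2 1
  have s13 := symL 3 1
  have s23 := symL 3 2
  clear_value L
  clear noiso symL star nodis rc
  have j0 : L 0 1 ∨ L 0 2 ∨ L 0 3 := by
    obtain ⟨j, hj, hl⟩ := i0
    fin_cases j <;> simp_all
  have j1 : L 0 1 ∨ L 1 2 ∨ L 1 3 := by
    obtain ⟨j, hj, hl⟩ := i1
    fin_cases j <;> simp_all
  have j2 : L 0 2 ∨ L 1 2 ∨ L 2 3 := by
    obtain ⟨j, hj, hl⟩ := i2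
    fin_cases j <;> simp_all
  have j3 : L 0 3 ∨ L 1 3 ∨ L 2 3 := by
    obtain ⟨j, hj, hl⟩ := i3
    fin_cases j <;> simp_all
  clear i0 i1 i2 i3 s01 s02 s03 s12 s13 s23
  generalize L 0 1 = p01 at *
  generalize L 0 2 = p02 at *
  generalize L 0 3 = p03 at *
  generalize L 1 2 = p12 at *
  generalize L 1 3 = p13 at *
  generalize L 2 3 = p23 at *
  clear hs h
  by_cases p01 <;> by_cases p02 <;> by_cases p03 <;> simp_all

/-- if `G` and `H` are connected graphs each with at least two
vertices, then `aw(G □ H, 3) ≤ 4`. -/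
theorem aw_boxProd_le_four {VG VH : Type*} [Fintype VG] [Fintype VH]
    (G : SimpleGraph VG) (H : SimpleGraph VH)
    (hG : G.Connected) (hH : H.Connected)
    (hg2 : 2 ≤ Fintype.card VG) (hh2 : 2 ≤ Fintype.card VH) :
    aw (G □ H) 3 ≤ 4 := by
  apply Nat.sInf_le
  refine ⟨by norm_num, ?_⟩
  intro c hc
  by_contra hno
  have : Nontrivial VG := Fintype.one_lt_card_iff_nontrivial.mp (by omega)
  have : Nontrivial VH := Fintype.one_lt_card_iff_nontrivial.mp (by omega)
  have hd : ∀ a b : VG × VH, (G □ H).dist a b = G.dist a.1 b.1 + H.dist a.2 b.2 := by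
    intro a b
    have e := edist_boxProd (G := G) (H := H) a b
    rw [← (hG a.1 b.1).coe_dist_eq_edist, ← (hH a.2 b.2).coe_dist_eq_edist,
      ← ((hG.boxProd hH) a b).coe_dist_eq_edist] at e
    exact_mod_cast e
  refine main_false hG hH (c := fun x y => c (x, y)) ?_ ?_
  · intro x y x1 y1 x2 y2 he
    by_contra hcon
    push Not at hcon
    obtain ⟨q1, q2, q3⟩ := hcon
    apply hno
    refine ⟨![(x1, y1), (x, y), (x2, y2)], ⟨G.dist x x1 + H.dist y y1, ?_⟩, ?_⟩
    · intro i hi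
      have : i = 0 ∨ i = 1 := by omega
      rcases this with rfl | rfl
      · simp [hd, SimpleGraph.dist_comm]
      · simp [hd, he]
    · intro i j hij
      fin_cases i <;> fin_cases j <;> simp_all [eq_comm]
  · intro i
    obtain ⟨⟨x, y⟩, hxy⟩ := hc i
    exact ⟨x, y, hxy⟩
end

section
/- If m ≥ 4 and n ≥ 4, then aw(P_m □ P_n, 3) = 4; that is, every exact 4-coloring of the grid P_m □ P_n contains a rainbow 3-AP, while some exact 3-coloring does not. -/
open SimpleGraph

namespace AWGrid
def NR (f : ℤ → ℤ → Fin 4) (p q : ℤ) : Prop :=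
  ∀ i j k l u v : ℤ, 0 ≤ i → i ≤ p → 0 ≤ j → j ≤ q → 0 ≤ k → k ≤ p → 0 ≤ l → l ≤ q →
    0 ≤ u → u ≤ p → 0 ≤ v → v ≤ q →
    (i-k).natAbs + (j-l).natAbs = (k-u).natAbs + (l-v).natAbs →
    f i j ≠ f k l → f k l ≠ f u v → f i j = f u v

def Onto (f : ℤ → ℤ → Fin 4) (p q : ℤ) : Prop :=
  ∀ a, ∃ i j : ℤ, 0 ≤ i ∧ i ≤ p ∧ 0 ≤ j ∧ j ≤ q ∧ f i j = a

/-- color `A` only occurs at the corner `(0,0)` -/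
def Cor (f : ℤ → ℤ → Fin 4) (p q : ℤ) (A : Fin 4) : Prop :=
  ∀ i j : ℤ, 0 ≤ i → i ≤ p → 0 ≤ j → j ≤ q → f i j = A → i = 0 ∧ j = 0

lemma Onto.cor {f p q A} (h : Onto f p q) (hA : Cor f p q A) : f 0 0 = A := by
  obtain ⟨i, j, h1, h2, h3, h4, h5⟩ := h A
  obtain ⟨rfl, rfl⟩ := hA i j h1 h2 h3 h4 h5
  exact h5

lemma NR.flip1 {f p q} (h : NR f p q) : NR (fun i j => f (p - i) j) p q := by
  intro i j k l u v _ _ _ _ _ _ _ _ _ _ _ _ _ h1 h2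
  exact h (p-i) j (p-k) l (p-u) v (by omega) (by omega) (by omega) (by omega) (by omega)
    (by omega) (by omega) (by omega) (by omega) (by omega) (by omega) (by omega) (by omega) h1 h2

lemma Onto.flip1 {f p q} (h : Onto f p q) : Onto (fun i j => f (p - i) j) p q := by
  intro a
  obtain ⟨i, j, h1, h2, h3, h4, h5⟩ := h a
  exact ⟨p - i, j, by omega, by omega, h3, h4, by simpa using h5⟩

lemma NR.tr {f p q} (h : NR f p q) : NR (fun i j => f j i) q p := by
  intro i j k l u v _ _ _ _ _ _ _ _ _ _ _ _ _ h1 h2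
  exact h j i l k v u (by omega) (by omega) (by omega) (by omega) (by omega)
    (by omega) (by omega) (by omega) (by omega) (by omega) (by omega) (by omega) (by omega) h1 h2

lemma Onto.tr {f p q} (h : Onto f p q) : Onto (fun i j => f j i) q p := by
  intro a
  obtain ⟨i, j, h1, h2, h3, h4, h5⟩ := h a
  exact ⟨j, i, h3, h4, h1, h2, h5⟩

lemma NR.flip2 {f p q} (h : NR f p q) : NR (fun i j => f i (q - j)) p q := h.tr.flip1.tr
lemma Onto.flip2 {f p q} (h : Onto f p q) : Onto (fun i j => f i (q - j)) p q := h.tr.flip1.tr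

lemma level {f p q A} (h : NR f p q) (ho : Onto f p q) (hA : Cor f p q A) (i j k l : ℤ)
    (hi : 0 ≤ i) (hip : i ≤ p) (hj : 0 ≤ j) (hjq : j ≤ q) (hk : 0 ≤ k) (hkp : k ≤ p) (hl : 0 ≤ l)
    (hlq : l ≤ q) (e : i + j = k + l) : f i j = f k l := by
  by_cases h0 : i + j = 0
  · obtain rfl : i = 0 := by omega
    obtain rfl : j = 0 := by omega
    obtain rfl : k = 0 := by omega
    obtain rfl : l = 0 := by omega
    rfl
  have h00 := ho.cor hA
  refine h i j 0 0 k l hi hip hj hjq (by omega) (by omega) (by omega) (by omega) hk hkp hl hlq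
    (by omega) ?_ ?_
  · intro hh
    have := hA i j hi hip hj hjq (hh.trans h00)
    omega
  · intro hh
    have := hA k l hk hkp hl hlq (hh.symm.trans h00)
    omega

/-- isosceles triangles with an end at the corner `A`. -/
lemma tri {f p q A} (h : NR f p q) (ho : Onto f p q) (hA : Cor f p q A) (i j k l : ℤ)
    (hi : 0 ≤ i) (hip : i ≤ p) (hj : 0 ≤ j) (hjq : j ≤ q) (hk : 0 ≤ k) (hkp : k ≤ p) (hl : 0 ≤ l)
    (hlq : l ≤ q) (h0 : 0 < i + j) (h1 : 0 < k + l)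
    (e : i + j = (i - k).natAbs + (j - l).natAbs) : f i j = f k l := by
  have h00 := ho.cor hA
  by_contra hne
  have := h 0 0 i j k l (by omega) (by omega) (by omega) (by omega) hi hip hj hjq hk hkp hl hlq
    (by omega) ?_ hne
  · have := hA k l hk hkp hl hlq (this.symm.trans h00)
    omega
  · intro hh
    have := hA i j hi hip hj hjq (hh.symm.trans h00)
    omega

lemma even_aux {f p q A} (h : NR f p q) (ho : Onto f p q) (hA : Cor f p q A)
    (hp : 1 ≤ p) (hq : 1 ≤ q) (t : ℕ) : ∀ (i j k l : ℤ)
    (_ : 0 ≤ i) (_ : i ≤ p) (_ : 0 ≤ j) (_ : j ≤ q) (_ : 0 ≤ k) (_ : k ≤ p) (_ : 0 ≤ l)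
    (_ : l ≤ q) (_ : i + j = 2) (_ : k + l = 2 * t + 2) (_ : k + l < p + q), f i j = f k l := by
  induction t with
  | zero =>
    intro i j k l _ _ _ _ _ _ _ _ _ _ _
    exact level h ho hA i j k l (by omega) (by omega) (by omega) (by omega) (by omega) (by omega)
      (by omega) (by omega) (by omega)
  | succ t ih =>
    intro i j k l _ _ _ _ _ _ _ _ h2 hkl hlt
    push_cast at hkl

    obtain ⟨a, b, a', b', ha, hap, hb, hbq, ha', hap', hb', hbq', e1, e2, e3⟩ :
      ∃ a b a' b' : ℤ, 0 ≤ a ∧ a ≤ p ∧ 0 ≤ b ∧ b ≤ q ∧ 0 ≤ a' ∧ a' ≤ p ∧ 0 ≤ b' ∧ b' ≤ q ∧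
        a + b = t + 2 ∧ a' + b' = 2 * t + 2 ∧ a + b = (a - a').natAbs + (b - b').natAbs := by
      rcases le_total p q with hpq | hpq
      · rcases le_total ((t:ℤ) + 2) p with hs | hs
        · exact ⟨t + 2, 0, t + 1, t + 1, by omega, by omega, by omega, by omega, by omega, by omega,
            by omega, by omega, by omega, by omega, by omega⟩
        · exact ⟨p, t + 2 - p, p - 1, t + 2 - p + t + 1, by omega, by omega, by omega, by omega,
            by omega, by omega, by omega, by omega, by omega, by omega, by omega⟩
      · rcases le_total ((t:ℤ) + 2) q with hs | hs
        · exact ⟨0, t + 2, t + 1, t + 1, by omega, by omega, by omega, by omega, by omega, by omega,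
            by omega, by omega, by omega, by omega, by omega⟩
        · exact ⟨t + 2 - q, q, t + 2 - q + t + 1, q - 1, by omega, by omega, by omega, by omega,
            by omega, by omega, by omega, by omega, by omega, by omega, by omega⟩
    obtain ⟨x, y, x', y', hx, hxp, hy, hyq, hx', hxp', hy', hyq', e4, e5, e6⟩ :
      ∃ a b a' b' : ℤ, 0 ≤ a ∧ a ≤ p ∧ 0 ≤ b ∧ b ≤ q ∧ 0 ≤ a' ∧ a' ≤ p ∧ 0 ≤ b' ∧ b' ≤ q ∧
        a + b = t + 2 ∧ a' + b' = 2 * t + 4 ∧ a + b = (a - a').natAbs + (b - b').natAbs := by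
      exact ⟨min ((t:ℤ) + 2) p, t + 2 - min ((t:ℤ)+2) p, min (2 * (t:ℤ) + 4) p,
        2 * t + 4 - min (2 * (t:ℤ) + 4) p,
        by omega, by omega, by omega, by omega, by omega, by omega,
        by omega, by omega, by omega, by omega, by omega⟩
    have g1 := ih i j a' b' (by omega) (by omega) (by omega) (by omega) (by omega) (by omega)
      (by omega) (by omega) (by omega) (by omega) (by omega)
    have g2 := tri h ho hA a b a' b' ha hap hb hbq ha' hap' hb' hbq' (by omega) (by omega) e3
    have g3 := tri h ho hA x y x' y' hx hxp hy hyq hx' hxp' hy' hyq' (by omega) (by omega) e6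
    have g4 := level h ho hA a b x y ha hap hb hbq hx hxp hy hyq (by omega)
    have g5 := level h ho hA k l x' y' (by omega) (by omega) (by omega) (by omega) hx' hxp' hy' hyq'
      (by omega)
    rw [g1, ← g2, g4, g3, g5]

lemma even_same {f p q A} (h : NR f p q) (ho : Onto f p q) (hA : Cor f p q A)
    (hp : 1 ≤ p) (hq : 1 ≤ q) (i j k l : ℤ)
    (_ : 0 ≤ i) (_ : i ≤ p) (_ : 0 ≤ j) (_ : j ≤ q) (_ : 0 ≤ k) (_ : k ≤ p) (_ : 0 ≤ l)
    (_ : l ≤ q) (_ : 0 < i + j) (_ : i + j < p + q) (_ : (i + j) % 2 = 0)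
    (_ : 0 < k + l) (_ : k + l < p + q) (_ : (k + l) % 2 = 0) : f i j = f k l := by
  have h1 := even_aux h ho hA hp hq ((i+j-2)/2).toNat 1 1 i j (by omega) (by omega) (by omega)
    (by omega) (by omega) (by omega) (by omega) (by omega) (by omega) (by omega) (by omega)
  have h2 := even_aux h ho hA hp hq ((k+l-2)/2).toNat 1 1 k l (by omega) (by omega) (by omega)
    (by omega) (by omega) (by omega) (by omega) (by omega) (by omega) (by omega) (by omega)
  rw [← h1, h2]

lemma corner {f p q A B} (h : NR f p q) (ho : Onto f p q) (hA : Cor f p q A)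
    (hB : Cor (fun i j => f (p - i) (q - j)) p q B)
    (hp : 1 ≤ p) (hq : 1 ≤ q) : False := by
  have h' : NR (fun i j => f (p - i) (q - j)) p q := h.flip2.flip1
  have ho' : Onto (fun i j => f (p - i) (q - j)) p q := ho.flip2.flip1
  have hfA := ho.cor hA
  have hfB : f p q = B := by simpa using ho'.cor hB
  have hB' : ∀ i j : ℤ, 0 ≤ i → i ≤ p → 0 ≤ j → j ≤ q → f i j = B → i = p ∧ j = q := by
    intro i j _ _ _ _ e
    have := hB (p - i) (q - j) (by omega) (by omega) (by omega) (by omega) (by simpa using e)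
    omega
  have hAB : A ≠ B := by
    intro e
    have := hB' 0 0 (by omega) (by omega) (by omega) (by omega) (hfA.trans e)
    omega
  have hodd : (p + q) % 2 = 1 := by
    by_contra hne
    have := tri h ho hA (min ((p+q)/2) p) ((p+q)/2 - min ((p+q)/2) p) p q (by omega) (by omega)
      (by omega) (by omega) (by omega) (by omega) (by omega) (by omega) (by omega) (by omega)
      (by omega)
    have := hB' _ _ (by omega) (by omega) (by omega) (by omega) (this.trans hfB)
    omega
  have h12 : f 0 1 = f 1 1 := tri h ho hA 0 1 1 1 (by omega) (by omega)
      (by omega) (by omega) (by omega) (by omega) (by omega) (by omega) (by omega) (by omega)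
      (by omega)
  have key : ∀ i j : ℤ, 0 ≤ i → i ≤ p → 0 ≤ j → j ≤ q → f i j = A ∨ f i j = B ∨ f i j = f 1 1 := by
    intro i j _ _ _ _
    by_cases c1 : i + j = 0
    · left
      obtain rfl : i = 0 := by omega
      obtain rfl : j = 0 := by omega
      exact hfA
    by_cases c2 : i + j = p + q
    · right; left
      obtain rfl : i = p := by omega
      obtain rfl : j = q := by omega
      exact hfB
    right; right
    rcases Int.emod_two_eq_zero_or_one (i + j) with c3 | c3
    · exact even_same h ho hA hp hq i j 1 1 (by omega) (by omega)
        (by omega) (by omega) (by omega) (by omega) (by omega) (by omega) (by omega) (by omega)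
        (by omega) (by omega) (by omega) (by omega)
    · have := even_same h' ho' hB hp hq (p-i) (q-j) (p-0) (q-1) (by omega) (by omega)
        (by omega) (by omega) (by omega) (by omega) (by omega) (by omega) (by omega) (by omega)
        (by omega) (by omega) (by omega) (by omega)
      simp only [sub_sub_cancel] at this
      rw [this, h12]
  have : ∀ a b c : Fin 4, ∃ d, d ≠ a ∧ d ≠ b ∧ d ≠ c := by decide
  obtain ⟨d, d1, d2, d3⟩ := this A B (f 1 1)
  obtain ⟨i, j, h1, h2, h3, h4, rfl⟩ := ho d
  rcases key i j h1 h2 h3 h4 with e | e | e <;> contradiction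

/-- `A` only at the corner, `B` only in the last row -/
lemma semi {f p q A B} (h : NR f p q) (ho : Onto f p q) (hA : Cor f p q A)
    (hB : ∀ i j : ℤ, 0 ≤ i → i ≤ p → 0 ≤ j → j ≤ q → f i j = B → i = p)
    (hp : 1 ≤ p) (hq : 1 ≤ q) : False := by
  refine corner (B := B) h ho hA ?_ hp hq
  intro i j _ _ _ _ e
  have h1 := hB (p - i) (q - j) (by omega) (by omega) (by omega) (by omega) e
  obtain rfl : i = 0 := by omega
  refine ⟨rfl, ?_⟩
  by_contra hj
  have := level h ho hA (p-0) (q-j) (p-1) (q-j+1) (by omega) (by omega)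
        (by omega) (by omega) (by omega) (by omega) (by omega) (by omega) (by omega)
  have := hB (p - 1) (q - j + 1) (by omega) (by omega) (by omega) (by omega) (this.symm.trans e)
  omega

def TopR (f : ℤ → ℤ → Fin 4) (p q : ℤ) (A : Fin 4) : Prop :=
  ∀ i j : ℤ, 0 ≤ i → i ≤ p → 0 ≤ j → j ≤ q → f i j = A → i = 0
def BotR (f : ℤ → ℤ → Fin 4) (p q : ℤ) (A : Fin 4) : Prop :=
  ∀ i j : ℤ, 0 ≤ i → i ≤ p → 0 ≤ j → j ≤ q → f i j = A → i = p
def Lef (f : ℤ → ℤ → Fin 4) (p q : ℤ) (A : Fin 4) : Prop :=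
  ∀ i j : ℤ, 0 ≤ i → i ≤ p → 0 ≤ j → j ≤ q → f i j = A → j = 0
def Rig (f : ℤ → ℤ → Fin 4) (p q : ℤ) (A : Fin 4) : Prop :=
  ∀ i j : ℤ, 0 ≤ i → i ≤ p → 0 ≤ j → j ≤ q → f i j = A → j = q

lemma TopR.flip2 {f p q A} (h : TopR f p q A) : TopR (fun i j => f i (q - j)) p q A :=
  fun i j _ _ _ _ e => h i (q - j) (by omega) (by omega) (by omega) (by omega) e
lemma BotR.flip2 {f p q A} (h : BotR f p q A) : BotR (fun i j => f i (q - j)) p q A :=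
  fun i j _ _ _ _ e => h i (q - j) (by omega) (by omega) (by omega) (by omega) e
lemma TopR.flip1 {f p q A} (h : TopR f p q A) : BotR (fun i j => f (p - i) j) p q A :=
  fun i j _ _ _ _ e => by
    have := h (p - i) j (by omega) (by omega) (by omega) (by omega) e
    omega
lemma BotR.flip1 {f p q A} (h : BotR f p q A) : TopR (fun i j => f (p - i) j) p q A :=
  fun i j _ _ _ _ e => by
    have := h (p - i) j (by omega) (by omega) (by omega) (by omega) e
    omega
lemma Lef.flip1 {f p q A} (h : Lef f p q A) : Lef (fun i j => f (p - i) j) p q A :=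
  fun i j _ _ _ _ e => h (p - i) j (by omega) (by omega) (by omega) (by omega) e
lemma Rig.flip1 {f p q A} (h : Rig f p q A) : Rig (fun i j => f (p - i) j) p q A :=
  fun i j _ _ _ _ e => h (p - i) j (by omega) (by omega) (by omega) (by omega) e
lemma Rig.flip2 {f p q A} (h : Rig f p q A) : Lef (fun i j => f i (q - j)) p q A :=
  fun i j _ _ _ _ e => by
    have := h i (q - j) (by omega) (by omega) (by omega) (by omega) e
    omega
lemma Lef.tr {f p q A} (h : Lef f p q A) : TopR (fun i j => f j i) q p A :=
  fun i j _ _ _ _ e => h j i (by omega) (by omega) (by omega) (by omega) e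
lemma Rig.tr {f p q A} (h : Rig f p q A) : BotR (fun i j => f j i) q p A :=
  fun i j _ _ _ _ e => h j i (by omega) (by omega) (by omega) (by omega) e

lemma tl {f p q A B} (h : NR f p q) (ho : Onto f p q) (hT : TopR f p q A) (hL : Lef f p q A)
    (hB : BotR f p q B) (hp : 1 ≤ p) (hq : 1 ≤ q) : False :=
  semi h ho (fun i j a b c d e => ⟨hT i j a b c d e, hL i j a b c d e⟩) hB hp hq

lemma big {f p q T B L R} (h : NR f p q) (ho : Onto f p q) (hT : TopR f p q T) (hB : BotR f p q B)
    (hL : Lef f p q L) (hR : Rig f p q R) (hp : 2 ≤ p) (hq : 2 ≤ q) : False := by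
  have hTB : T ≠ B := by
    rintro rfl
    obtain ⟨i, j, h1, h2, h3, h4, h5⟩ := ho T
    have := hT i j h1 h2 h3 h4 h5
    have := hB i j h1 h2 h3 h4 h5
    omega
  have hLR : L ≠ R := by
    rintro rfl
    obtain ⟨i, j, h1, h2, h3, h4, h5⟩ := ho L
    have := hL i j h1 h2 h3 h4 h5
    have := hR i j h1 h2 h3 h4 h5
    omega
  by_cases e1 : T = L
  · subst e1; exact tl h ho hT hL hB (by omega) (by omega)
  by_cases e2 : T = R
  · subst e2; exact tl h.flip2 ho.flip2 hT.flip2 hR.flip2 hB.flip2 (by omega) (by omega)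
  by_cases e3 : B = L
  · subst e3; exact tl h.flip1 ho.flip1 hB.flip1 hL.flip1 hT.flip1 (by omega) (by omega)
  by_cases e4 : B = R
  · subst e4
    exact tl h.flip1.flip2 ho.flip1.flip2 hB.flip1.flip2 hR.flip1.flip2 hT.flip1.flip2
      (by omega) (by omega)
  have t1 : f 1 1 ≠ T := fun e => by
    have := hT 1 1 (by omega) (by omega) (by omega) (by omega) e
    omega
  have t2 : f 1 1 ≠ B := fun e => by
    have := hB 1 1 (by omega) (by omega) (by omega) (by omega) e
    omega
  have t3 : f 1 1 ≠ L := fun e => by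
    have := hL 1 1 (by omega) (by omega) (by omega) (by omega) e
    omega
  have t4 : f 1 1 ≠ R := fun e => by
    have := hR 1 1 (by omega) (by omega) (by omega) (by omega) e
    omega
  generalize f 1 1 = x at *
  clear h ho hT hB hL hR
  revert x T B L R
  decide

/-- width two strips -/
lemma strip {f p A B} (h : NR f p 1) (ho : Onto f p 1) (hT : TopR f p 1 A) (hB : BotR f p 1 B)
    (hp : 2 ≤ p) : False := by
  by_cases c0 : f 0 0 = A
  swap
  · refine semi h.flip2 ho.flip2 (A := A) ?_ hB.flip2 (by omega) (by omega)
    intro i j a b c d e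
    have hi := hT.flip2 i j a b c d e
    refine ⟨hi, ?_⟩
    by_contra hj
    obtain rfl : j = 1 := by omega
    subst hi
    exact c0 (by simpa using e)
  by_cases c1 : f 0 1 = A
  swap
  · refine semi h ho (A := A) ?_ hB (by omega) (by omega)
    intro i j a b c d e
    have hi := hT i j a b c d e
    refine ⟨hi, ?_⟩
    by_contra hj
    obtain rfl : j = 1 := by omega
    subst hi
    exact c1 (by simpa using e)
  obtain ⟨i, j, h1, h2, h3, h4, h5⟩ := ho B
  obtain rfl := hB i j h1 h2 h3 h4 h5
  have c : ∀ j, 0 ≤ j → j ≤ 1 → f 0 j = A := by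
    intro j _ _
    obtain rfl | rfl : j = 0 ∨ j = 1 := by omega
    · exact c0
    · exact c1
  have hj := c j h3 h4
  have := h i j 0 j (i - 1) (1 - j) h1 h2 h3 h4 (by omega) (by omega) (by omega) (by omega)
    (by omega) (by omega) (by omega) (by omega) (by omega) ?_ ?_
  · have := hB (i - 1) (1 - j) (by omega) (by omega) (by omega) (by omega) (this.symm.trans h5)
    omega
  · intro e
    have := hT i j h1 h2 h3 h4 (e.trans hj)
    omega
  · intro e
    have := hT (i - 1) (1 - j) (by omega) (by omega) (by omega) (by omega) (e.symm.trans hj)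
    omega

lemma small {f} (h : NR f 1 1) (ho : Onto f 1 1) : False := by
  have key : ∀ i j : ℤ, 0 ≤ i → i ≤ 1 → 0 ≤ j → j ≤ 1 →
      f i j = f 0 0 ∨ f i j = f 0 1 ∨ f i j = f 1 0 ∨ f i j = f 1 1 := by
    intro i j _ _ _ _
    obtain rfl | rfl : i = 0 ∨ i = 1 := by omega
    all_goals
      obtain rfl | rfl : j = 0 ∨ j = 1 := by omega
      all_goals simp
  have k2 : ∀ a, a = f 0 0 ∨ a = f 0 1 ∨ a = f 1 0 ∨ a = f 1 1 := by
    intro a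
    obtain ⟨i, j, h1, h2, h3, h4, rfl⟩ := ho a
    exact key i j h1 h2 h3 h4
  have := h 0 1 0 0 1 0 (by omega) (by omega) (by omega) (by omega) (by omega) (by omega)
    (by omega) (by omega) (by omega) (by omega) (by omega) (by omega) (by omega)
  generalize f 0 0 = a at *
  generalize f 0 1 = b at *
  generalize f 1 0 = c at *
  generalize f 1 1 = d at *
  clear h ho key
  revert a b c d
  decide

lemma exTop {f p q} (h : NR f p q) (ih : ∀ f, NR f (p - 1) q → ¬ Onto f (p - 1) q) :
    ∃ A, TopR f p q A := by
  have h1 := ih (fun i j => f (i + 1) j) (by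
    intro i j k l u v _ _ _ _ _ _ _ _ _ _ _ _ _ h1 h2
    exact h (i+1) j (k+1) l (u+1) v (by omega) (by omega) (by omega) (by omega) (by omega)
      (by omega) (by omega) (by omega) (by omega) (by omega) (by omega) (by omega) (by omega) h1 h2)
  unfold Onto at h1
  push Not at h1
  obtain ⟨A, hA⟩ := h1
  refine ⟨A, ?_⟩
  intro i j _ _ _ _ e
  by_contra hne
  exact hA (i - 1) j (by omega) (by omega) (by omega) (by omega) (by simpa using e)

lemma exBot {f p q} (h : NR f p q) (ih : ∀ f, NR f (p - 1) q → ¬ Onto f (p - 1) q) :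
    ∃ A, BotR f p q A := by
  obtain ⟨A, hA⟩ := exTop h.flip1 ih
  exact ⟨A, by simpa using hA.flip1⟩

lemma main (N : ℕ) : ∀ (f : ℤ → ℤ → Fin 4) (p q : ℤ), 1 ≤ p → 1 ≤ q → p + q ≤ N → NR f p q →
    ¬ Onto f p q := by
  induction N with
  | zero => intros; omega
  | succ N ih =>
    intro f p q hp hq hN h ho
    have i1 : 2 ≤ p → ∀ f, NR f (p - 1) q → ¬ Onto f (p - 1) q :=
      fun h2 f => ih f (p - 1) q (by omega) hq (by omega)
    have i2 : 2 ≤ q → ∀ f, NR f (q - 1) p → ¬ Onto f (q - 1) p :=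
      fun h2 f => ih f (q - 1) p (by omega) hp (by omega)
    by_cases cp : 2 ≤ p
    · obtain ⟨T, hT⟩ := exTop h (i1 cp)
      obtain ⟨B, hB⟩ := exBot h (i1 cp)
      by_cases cq : 2 ≤ q
      · obtain ⟨L, hL⟩ := exTop h.tr (i2 cq)
        obtain ⟨R, hR⟩ := exBot h.tr (i2 cq)
        exact big h ho hT hB (fun i j a b c d e => hL j i c d a b e)
          (fun i j a b c d e => hR j i c d a b e) cp cq
      · obtain rfl : q = 1 := by omega
        exact strip h ho hT hB cp
    · obtain rfl : p = 1 := by omega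
      by_cases cq : 2 ≤ q
      · obtain ⟨L, hL⟩ := exTop h.tr (i2 cq)
        obtain ⟨R, hR⟩ := exBot h.tr (i2 cq)
        exact strip h.tr ho.tr hL hR cq
      · obtain rfl : q = 1 := by omega
        exact small h ho

lemma path_lb {n : ℕ} {u v : Fin n} (w : (pathGraph n).Walk u v) :
    ((u : ℤ) - v).natAbs ≤ w.length := by
  induction w with
  | nil => simp
  | cons h w ih =>
    rw [pathGraph_adj] at h
    rw [Walk.length_cons]
    omega

lemma path_ub {n : ℕ} (k : ℕ) : ∀ u v : Fin n, (u : ℕ) + k = v →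
    ∃ w : (pathGraph n).Walk u v, w.length = k := by
  induction k with
  | zero =>
    intro u v h
    obtain rfl : u = v := Fin.ext (by omega)
    exact ⟨.nil, rfl⟩
  | succ k ih =>
    intro u v h
    obtain ⟨w, hw⟩ := ih ⟨u + 1, by omega⟩ v (by simp; omega)
    exact ⟨.cons (by rw [pathGraph_adj]; simp) w, by simp [hw]⟩

lemma path_dist {n : ℕ} (u v : Fin n) : (pathGraph n).dist u v = ((u : ℤ) - v).natAbs := by
  apply le_antisymm
  · rcases le_total (u : ℕ) v with h | h
    · obtain ⟨w, hw⟩ := path_ub (v - u : ℕ) u v (by omega)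
      have := dist_le w
      omega
    · obtain ⟨w, hw⟩ := path_ub (u - v : ℕ) v u (by omega)
      have := dist_le w
      rw [dist_comm]
      omega
  · obtain ⟨w, hw⟩ := (pathGraph_preconnected n u v).exists_walk_length_eq_dist
    rw [← hw]
    exact path_lb w

lemma grid_dist {m n : ℕ} (x y : Fin m × Fin n) : (pathGraph m □ pathGraph n).dist x y =
    ((x.1 : ℤ) - y.1).natAbs + ((x.2 : ℤ) - y.2).natAbs := by
  have h1 := (pathGraph_preconnected m x.1 y.1).coe_dist_eq_edist
  have h2 := (pathGraph_preconnected n x.2 y.2).coe_dist_eq_edist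
  have : (pathGraph m □ pathGraph n).edist x y =
      (((x.1 : ℤ) - y.1).natAbs + ((x.2 : ℤ) - y.2).natAbs : ℕ) := by
    rw [edist_boxProd, ← h1, ← h2, path_dist, path_dist]
    push_cast
    rfl
  rw [SimpleGraph.dist, this]
  rfl

lemma rainbow_iff {V α : Type*} (G : SimpleGraph V) (c : V → α) : HasRainbowAP G 3 c ↔
    ∃ x y z, G.dist x y = G.dist y z ∧ c x ≠ c y ∧ c y ≠ c z ∧ c x ≠ c z := by
  constructor
  · rintro ⟨v, ⟨d, hd⟩, hinj⟩
    refine ⟨v 0, v 1, v 2, ?_, ?_, ?_, ?_⟩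
    · exact (hd 0 (by omega)).trans (hd 1 (by omega)).symm
    · exact fun e => absurd (hinj (a₁ := 0) (a₂ := 1) e) (by decide)
    · exact fun e => absurd (hinj (a₁ := 1) (a₂ := 2) e) (by decide)
    · exact fun e => absurd (hinj (a₁ := 0) (a₂ := 2) e) (by decide)
  · rintro ⟨x, y, z, h, h1, h2, h3⟩
    refine ⟨![x, y, z], ⟨G.dist x y, ?_⟩, ?_⟩
    · intro i hi
      obtain rfl | rfl : i = 0 ∨ i = 1 := by omega
      · rfl
      · exact h.symm
    · intro i j e
      fin_cases i <;> fin_cases j <;> simp_all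

lemma upper (m n : ℕ) (hm : 4 ≤ m) (hn : 4 ≤ n) (c : Fin m × Fin n → Fin 4)
    (hc : Function.Surjective c) : HasRainbowAP (pathGraph m □ pathGraph n) 3 c := by
  rw [rainbow_iff]
  by_contra hno
  push Not at hno
  have key (i : ℤ) (j : ℤ) : ∃ x : Fin m × Fin n, 0 ≤ i → i ≤ m - 1 → 0 ≤ j → j ≤ n - 1 →
      (x.1 : ℤ) = i ∧ (x.2 : ℤ) = j := by
    by_cases h : 0 ≤ i ∧ i ≤ m - 1 ∧ 0 ≤ j ∧ j ≤ n - 1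
    · refine ⟨(⟨i.toNat, by omega⟩, ⟨j.toNat, by omega⟩), ?_⟩
      intros
      simp only
      omega
    · refine ⟨(⟨0, by omega⟩, ⟨0, by omega⟩), ?_⟩
      intros
      omega
  choose g hg using key
  refine main (m + n) (fun i j => c (g i j)) (m - 1) (n - 1) (by omega) (by omega) (by omega) ?_ ?_
  · intro i j k l u v a1 a2 a3 a4 a5 a6 a7 a8 a9 a10 a11 a12 e h1 h2
    refine hno (g i j) (g k l) (g u v) ?_ h1 h2
    rw [grid_dist, grid_dist, (hg i j a1 a2 a3 a4).1, (hg i j a1 a2 a3 a4).2,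
      (hg k l a5 a6 a7 a8).1, (hg k l a5 a6 a7 a8).2,
      (hg u v a9 a10 a11 a12).1, (hg u v a9 a10 a11 a12).2]
    exact e
  · intro a
    obtain ⟨x, rfl⟩ := hc a
    have h1 := x.1.isLt
    have h2 := x.2.isLt
    refine ⟨x.1, x.2, by omega, by omega, by omega, by omega, ?_⟩
    have := hg x.1 x.2 (by omega) (by omega) (by omega) (by omega)
    have e : g x.1 x.2 = x := Prod.ext (Fin.ext (by omega)) (Fin.ext (by omega))
    simp only [e]

/-- A 3-coloring from a predicate `P`: the corner is red, `P` is blue, the rest is white. -/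
lemma lower_aux (m n : ℕ) (hm : 4 ≤ m) (hn : 4 ≤ n) (D : ℕ) (hD : D % 2 = 1)
    (h1 : D + 3 = m + n ∨ D + 2 = m + n) :
    ∃ c : Fin m × Fin n → Fin 3, Function.Surjective c ∧
      ¬ HasRainbowAP (pathGraph m □ pathGraph n) 3 c := by
  let c : Fin m × Fin n → Fin 3 := fun x =>
    if (x.1 : ℕ) + x.2 = 0 then 0 else if (x.1 : ℕ) + x.2 = D then 1 else 2
  have c0 : ∀ x, c x = 0 ↔ (x.1 : ℕ) + x.2 = 0 := by
    intro x; simp only [c]; split_ifs <;> simp_all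
  have c1 : ∀ x, c x = 1 ↔ (x.1 : ℕ) + x.2 = D := by
    intro x; simp only [c]; split_ifs <;> simp_all <;> omega
  have c2 : ∀ x, c x = 2 ↔ (x.1 : ℕ) + x.2 ≠ 0 ∧ (x.1 : ℕ) + x.2 ≠ D := by
    intro x; simp only [c]; split_ifs <;> simp_all
  refine ⟨c, ?_, ?_⟩
  · intro a
    obtain rfl | rfl | rfl : a = 0 ∨ a = 1 ∨ a = 2 := by omega
    · exact ⟨(⟨0, by omega⟩, ⟨0, by omega⟩), by rw [c0]; rfl⟩
    · exact ⟨(⟨m - 1, by omega⟩, ⟨D - (m - 1), by omega⟩), by rw [c1]; simp only; omega⟩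
    · exact ⟨(⟨0, by omega⟩, ⟨1, by omega⟩), by rw [c2]; simp only; omega⟩
  · rw [rainbow_iff]
    rintro ⟨x, y, z, h, hxy, hyz, hxz⟩
    rw [grid_dist, grid_dist] at h
    have b1 := x.1.isLt
    have b2 := x.2.isLt
    have b3 := y.1.isLt
    have b4 := y.2.isLt
    have b5 := z.1.isLt
    have b6 := z.2.isLt
    have k1 := c0 x
    have k2 := c1 x
    have k3 := c2 x
    have k4 := c0 y
    have k5 := c1 y
    have k6 := c2 y
    have k7 := c0 z
    have k8 := c1 z
    have k9 := c2 z
    have t : ∀ a b c : Fin 3, a ≠ b → b ≠ c → a ≠ c →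
      (a = 0 ∧ b = 1 ∧ c = 2) ∨ (a = 0 ∧ b = 2 ∧ c = 1) ∨ (a = 1 ∧ b = 0 ∧ c = 2) ∨
      (a = 1 ∧ b = 2 ∧ c = 0) ∨ (a = 2 ∧ b = 1 ∧ c = 0) ∨ (a = 2 ∧ b = 0 ∧ c = 1) := by decide
    rcases t _ _ _ hxy hyz hxz with ⟨e1, e2, e3⟩ | ⟨e1, e2, e3⟩ | ⟨e1, e2, e3⟩ | ⟨e1, e2, e3⟩ |
      ⟨e1, e2, e3⟩ | ⟨e1, e2, e3⟩ <;>
    · simp only [e1, true_iff] at k1 k2 k3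
      simp only [e2, true_iff] at k4 k5 k6
      simp only [e3, true_iff] at k7 k8 k9
      clear c0 c1 c2 t e1 e2 e3 hxy hyz hxz c
      simp only [Fin.isValue, one_ne_zero, zero_ne_one, Fin.reduceEq, false_iff, true_iff] at *
      omega

lemma few {V : Type*} (G : SimpleGraph V) (r : ℕ) (hr : r < 3) (c : V → Fin r) :
    ¬ HasRainbowAP G 3 c := by
  rintro ⟨v, -, h⟩
  have := Fintype.card_le_of_injective _ h
  simp at this
  omega

end AWGrid

/-- if `m, n ≥ 4`, then `aw(P_m □ P_n, 3) = 4`. -/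
theorem aw_eq_four_big (m n : ℕ) (hm : 4 ≤ m) (hn : 4 ≤ n) :
    aw (pathGraph m □ pathGraph n) 3 = 4 := by
  unfold aw
  have hmem : 4 ∈ {r : ℕ | 0 < r ∧ ∀ c : Fin m × Fin n → Fin r, Function.Surjective c →
      HasRainbowAP (pathGraph m □ pathGraph n) 3 c} :=
    ⟨by omega, AWGrid.upper m n hm hn⟩
  apply le_antisymm
  · exact Nat.sInf_le hmem
  · refine le_csInf ⟨4, hmem⟩ ?_
    rintro r ⟨hr, h⟩
    by_contra hlt
    obtain rfl | hr3 : r = 3 ∨ r < 3 := by omega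
    · obtain ⟨c, hc, hno⟩ : ∃ c : Fin m × Fin n → Fin 3, Function.Surjective c ∧
          ¬ HasRainbowAP (pathGraph m □ pathGraph n) 3 c := by
        by_cases hp : (m + n) % 2 = 0
        · exact AWGrid.lower_aux m n hm hn (m + n - 3) (by omega) (by omega)
        · exact AWGrid.lower_aux m n hm hn (m + n - 2) (by omega) (by omega)
      exact hno (h c hc)
    · let c : Fin m × Fin n → Fin r := fun x => ⟨min x.1 (r - 1), by omega⟩
      refine AWGrid.few _ r hr3 c (h c ?_)
      intro a
      refine ⟨(⟨a, by omega⟩, ⟨0, by omega⟩), Fin.ext ?_⟩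
      simp only [c]
      omega
end
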